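/- For every n ≥ 2 there exists a word a over {0,1} such that s_{n+2} = a s_n s_{n−1} s_n. -/

import Mathlib

open scoped Classical

noncomputable section

/-- The Sturmian potential `v_{α,θ}(n) = χ_{[1-α,1)}(nα + θ mod 1)`. -/
def sturmian (α θ : ℝ) (n : ℤ) : ℝ :=
  if Int.fract (n * α + θ) ∈ Set.Ico (1 - α) 1 then 1 else 0

/-- Iterates of the Gauss map, starting at `α`. -/
def cfGauss (α : ℝ) : ℕ → ℝ
  | 0 => α
  | n + 1 => Int.fract (cfGauss α n)⁻¹

/-- The continued fraction coefficients `a_n` of `α = [a_1, a_2, …]` (for `n ≥ 1`):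
`a_1 = ⌊1/α⌋`, `a_2 = ⌊1/fract(1/α)⌋`, … . -/
def cfCoeff (α : ℝ) (n : ℕ) : ℕ := ⌊(cfGauss α (n - 1))⁻¹⌋₊

/-- The standard words, with an index shift: `sWord a n` is `s_{n-1}`.  Thus
`sWord a 0 = s_{-1} = 1`, `sWord a 1 = s_0 = 0`, `sWord a 2 = s_1 = 0^{a_1 - 1} 1`, and
`sWord a (n+1) = s_n = s_{n-1}^{a_n} s_{n-2}` for `n ≥ 2`. -/
def sWord (a : ℕ → ℕ) : ℕ → List ℝ
  | 0 => [1]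
  | 1 => [0]
  | 2 => List.replicate (a 1 - 1) (0 : ℝ) ++ [1]
  | n + 3 => (List.replicate (a (n + 2)) (sWord a (n + 2))).flatten ++ sWord a (n + 1)

/-- The `n`-th letter (for `n ≥ 1`) of the one-sided infinite word `c_α = lim s_n`:
since `|s_n| ≥ n`, it is the `n`-th letter of `s_n`. -/
def cword (α : ℝ) (n : ℕ) : ℝ := (sWord (cfCoeff α) (n + 1)).getD (n - 1) 0

/-- `w` is a (finite) prefix of the one-sided infinite word `c_α`. -/
def IsPrefC (α : ℝ) (w : List ℝ) : Prop :=
  w = (List.range w.length).map fun i => cword α (i + 1)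

/-- The one-step transfer matrix `T(λ,E,a) = [[E - λa, -1], [1, 0]]`. -/
def transferT (lam : ℝ) (E : ℂ) (a : ℝ) : Matrix (Fin 2) (Fin 2) ℂ :=
  !![E - lam * a, -1; 1, 0]

/-- The transfer matrix over a word `w = w_1 … w_n`:
`M(λ,E,w) = T(λ,E,w_n) ⋯ T(λ,E,w_1)`. -/
def transferM (lam : ℝ) (E : ℂ) : List ℝ → Matrix (Fin 2) (Fin 2) ℂ
  | [] => 1
  | a :: w => transferM lam E w * transferT lam E a

/-- The operator norm on `ℂ²` (with the euclidean norm) of a `2 × 2` complex matrix. -/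
def opNorm (A : Matrix (Fin 2) (Fin 2) ℂ) : ℝ :=
  ‖Matrix.toEuclideanCLM (𝕜 := ℂ) A‖

/-- The word `v_{α,θ}^n = v_{α,θ}(1) … v_{α,θ}(n)`. -/
def sturmianWord (α θ : ℝ) (n : ℕ) : List ℝ :=
  (List.range n).map fun k => sturmian α θ (k + 1)

/-- The set of finite nonempty subwords of a two-sided sequence `v : ℤ → ℝ`. -/
def SubZ (v : ℤ → ℝ) : Set (List ℝ) :=
  {w | w ≠ [] ∧ ∃ k : ℤ, w = (List.range w.length).map fun i => v (k + i)}

/-- The set of finite nonempty subwords of the one-sided word `c_α` (indexed from `1`). -/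
def SubC (α : ℝ) : Set (List ℝ) :=
  {w | w ≠ [] ∧ ∃ k : ℕ, 1 ≤ k ∧ w = (List.range w.length).map fun i => cword α (k + i)}

/-- `W_α`, the set of all finite nonempty subwords of the sequences `v_{α,θ}`, `θ ∈ [0,1)`. -/
def Walpha (α : ℝ) : Set (List ℝ) :=
  {w | ∃ θ ∈ Set.Ico (0 : ℝ) 1, w ∈ SubZ (sturmian α θ)}

/-- `α` is a bounded density number: `limsup_{n→∞} (1/n) ∑_{j=1}^n a_j < ∞` for the
continued fraction coefficients `a_j` of `α`. -/
def BoundedDensity (α : ℝ) : Prop :=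
  Filter.IsBoundedUnder (· ≤ ·) Filter.atTop
    (fun n : ℕ => (1 / n : ℝ) * ∑ j ∈ Finset.Icc 1 n, (cfCoeff α j : ℝ))

end

/-!
Write `s_n` for `sWord a (n + 1)`. If `a_n ≠ 0`, a last copy of `s_{n-1}` can be split off the power
in `s_n = s_{n-1}^{a_n} s_{n-2}`, so `s_n` ends in `s_{n-1} s_{n-2}`. Hence `s_{n+2}` ends in
`s_{n+1} s_n`, and expanding this `s_{n+1}` once more yields the tail `s_n s_{n-1} s_n`. For
irrational `α` the coefficients are nonzero because the iterates of the Gauss map lie in `(0, 1)`.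
-/

theorem irrational_cfGauss {α : ℝ} (hα : Irrational α) (n : ℕ) : Irrational (cfGauss α n) := by
  induction n with
  | zero => exact hα
  | succ n ih => exact ih.inv.sub_intCast ⌊(cfGauss α n)⁻¹⌋

theorem cfGauss_succ_mem_Ioo {α : ℝ} (hα : Irrational α) (n : ℕ) :
    cfGauss α (n + 1) ∈ Set.Ioo (0 : ℝ) 1 :=
  ⟨Int.fract_pos.mpr ((irrational_cfGauss hα n).inv.ne_int _), Int.fract_lt_one _⟩

theorem cfCoeff_ne_zero {α : ℝ} (hα : Irrational α) {n : ℕ} (hn : 2 ≤ n) : cfCoeff α n ≠ 0 := by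
  obtain ⟨m, rfl⟩ := Nat.exists_eq_add_of_le' hn
  have ⟨hpos, hlt⟩ := cfGauss_succ_mem_Ioo hα m
  exact (Nat.floor_pos.mpr ((one_le_inv₀ hpos).mpr hlt.le)).ne'

theorem isSuffix_flatten_replicate {β : Type*} (w : List β) {k : ℕ} (hk : k ≠ 0) :
    w <:+ (List.replicate k w).flatten := by
  obtain ⟨j, rfl⟩ := Nat.exists_eq_succ_of_ne_zero hk
  rw [List.replicate_succ', List.flatten_concat]
  exact List.suffix_append _ _

theorem sWord_append_sWord_isSuffix {a : ℕ → ℕ} {n : ℕ} (ha : a (n + 2) ≠ 0) :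
    sWord a (n + 2) ++ sWord a (n + 1) <:+ sWord a (n + 3) :=
  List.suffix_append_self_iff.mpr (isSuffix_flatten_replicate _ ha)

theorem sWord_tail_decomposition_general (a : ℕ → ℕ) {n : ℕ} (hn : 1 ≤ n)
    (ha₁ : a (n + 1) ≠ 0) (ha₂ : a (n + 2) ≠ 0) :
    ∃ x : List ℝ, sWord a (n + 3) = x ++ sWord a (n + 1) ++ sWord a n ++ sWord a (n + 1) := by
  obtain ⟨m, rfl⟩ := Nat.exists_eq_add_of_le' hn
  have hinner : sWord a (m + 2) ++ sWord a (m + 1) ++ sWord a (m + 2) <:+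
      sWord a (m + 3) ++ sWord a (m + 2) :=
    List.suffix_append_self_iff.mpr (sWord_append_sWord_isSuffix ha₁)
  obtain ⟨x, hx⟩ := hinner.trans (sWord_append_sWord_isSuffix ha₂)
  exact ⟨x, by simpa only [List.append_assoc] using hx.symm⟩

theorem sWord_tail_decomposition
    (α : ℝ) (hirr : Irrational α) (hα : α ∈ Set.Ioo (0 : ℝ) 1)
    (n : ℕ) (hn : 2 ≤ n) :
    ∃ x : List ℝ, sWord (cfCoeff α) (n + 3) =
      x ++ sWord (cfCoeff α) (n + 1) ++ sWord (cfCoeff α) n ++ sWord (cfCoeff α) (n + 1) :=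
  sWord_tail_decomposition_general _ (by lia) (cfCoeff_ne_zero hirr (by lia))
    (cfCoeff_ne_zero hirr (by lia))
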